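/- arXiv:2402.13156 — 2 statements merged into one kernel-verified Lean document; each statement's English description precedes it below -/
import Mathlib

section
/- In any principal–agent instance, for every positive integer K there exists a K-tuple Π* of deterministic contracts attaining the infimum of the regret over K-tuples, i.e. R(Π*) = inf over all K-tuples Π of deterministic contracts of R(Π). -/
open Finset

variable {A Ω : Type} [Fintype A] [Fintype Ω] [Nonempty A] [Nonempty Ω]

/-- Agent's expected utility `U^a(p,c,a)` of action `a` under contract `p` and costs `c`. -/
noncomputable def Uag (F : A → Ω → ℝ) (p : Ω → ℝ) (c : A → ℝ) (a : A) : ℝ :=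
  (∑ ω, F a ω * p ω) - c a

/-- Principal's expected utility when the agent plays action `a` under contract `p`. -/
noncomputable def prinAct (F : A → Ω → ℝ) (r p : Ω → ℝ) (a : A) : ℝ :=
  ∑ ω, F a ω * (r ω - p ω)

/-- Principal's expected utility `U^p(p,c)`: the agent plays a best response,
with ties among best responses broken in favor of the principal. -/
noncomputable def Uprin (F : A → Ω → ℝ) (r p : Ω → ℝ) (c : A → ℝ) : ℝ :=
  sSup { x | ∃ a : A, (∀ a' : A, Uag F p c a' ≤ Uag F p c a) ∧ x = prinAct F r p a }

/-- A deterministic contract: nonnegative payments. -/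
def IsContract (p : Ω → ℝ) : Prop := ∀ ω, 0 ≤ p ω

/-- `OPT(c)`: the supremum over contracts of the principal's expected utility against `c`. -/
noncomputable def OPT (F : A → Ω → ℝ) (r : Ω → ℝ) (c : A → ℝ) : ℝ :=
  sSup { x | ∃ p : Ω → ℝ, IsContract p ∧ x = Uprin F r p c }

/-- The regret `R(p)` of a deterministic contract `p`. -/
noncomputable def regret (F : A → Ω → ℝ) (r : Ω → ℝ) (C : Set (A → ℝ)) (p : Ω → ℝ) : ℝ :=
  sSup { x | ∃ c ∈ C, x = OPT F r c - Uprin F r p c }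

/-- Uncertainty level `d(C)`: the L∞-diameter of the uncertainty set. -/
noncomputable def uncLevel (C : Set (A → ℝ)) : ℝ :=
  sSup { x | ∃ c ∈ C, ∃ c' ∈ C, x = ‖c - c'‖ }

/-- The assumptions defining a principal–agent instance `(A, Ω, r, C, F)`. -/
structure IsPAInstance (F : A → Ω → ℝ) (r : Ω → ℝ) (C : Set (A → ℝ)) : Prop where
  r_mem : ∀ ω, r ω ∈ Set.Icc (0:ℝ) 1
  F_mem : ∀ a ω, F a ω ∈ Set.Icc (0:ℝ) 1
  F_sum : ∀ a, ∑ ω, F a ω = 1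
  C_nonempty : C.Nonempty
  C_mem : ∀ c ∈ C, ∀ a, c a ∈ Set.Icc (0:ℝ) 1
  zero_action : ∃ a : A, ∀ c ∈ C, c a = 0

/-- The agent's best-response utility under contract `p`. -/
noncomputable def agentBest (F : A → Ω → ℝ) (p : Ω → ℝ) (c : A → ℝ) : ℝ :=
  ⨆ a : A, Uag F p c a

/-- Principal's expected utility `U^p(Π,c)` under a menu of deterministic contracts:
the agent selects an element maximizing its own utility, breaking ties in favor of
the principal. -/
noncomputable def UprinMenu (F : A → Ω → ℝ) (r : Ω → ℝ) {K : ℕ} (m : Fin K → Ω → ℝ)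
    (c : A → ℝ) : ℝ :=
  sSup { x | ∃ i : Fin K, (∀ j : Fin K, agentBest F (m j) c ≤ agentBest F (m i) c) ∧
    x = Uprin F r (m i) c }

/-- The regret `R(Π)` of a menu of deterministic contracts. -/
noncomputable def regretMenu (F : A → Ω → ℝ) (r : Ω → ℝ) (C : Set (A → ℝ)) {K : ℕ}
    (m : Fin K → Ω → ℝ) : ℝ :=
  sSup { x | ∃ c ∈ C, x = OPT F r c - UprinMenu F r m c }

section Helpers

variable {F : A → Ω → ℝ} {r : Ω → ℝ} {C : Set (A → ℝ)}

lemma Uprin_set_finite (F : A → Ω → ℝ) (r p : Ω → ℝ) (c : A → ℝ) :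
    { x | ∃ a : A, (∀ a' : A, Uag F p c a' ≤ Uag F p c a) ∧ x = prinAct F r p a }.Finite := by
  refine (Set.finite_range (fun a => prinAct F r p a)).subset ?_
  rintro x ⟨a, _, rfl⟩
  exact ⟨a, rfl⟩

lemma Uprin_attained (F : A → Ω → ℝ) (r p : Ω → ℝ) (c : A → ℝ) :
    ∃ a : A, (∀ a' : A, Uag F p c a' ≤ Uag F p c a) ∧ Uprin F r p c = prinAct F r p a := by
  obtain ⟨a, ha⟩ := Finite.exists_max (Uag F p c)
  exact Set.Nonempty.csSup_mem (s := { x | ∃ a : A, (∀ a' : A, Uag F p c a' ≤ Uag F p c a) ∧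
    x = prinAct F r p a }) ⟨_, a, ha, rfl⟩ (Uprin_set_finite F r p c)

lemma le_Uprin (F : A → Ω → ℝ) (r p : Ω → ℝ) (c : A → ℝ) (a : A)
    (ha : ∀ a' : A, Uag F p c a' ≤ Uag F p c a) : prinAct F r p a ≤ Uprin F r p c :=
  le_csSup (Uprin_set_finite F r p c).bddAbove ⟨a, ha, rfl⟩

lemma Uag_le_agentBest (F : A → Ω → ℝ) (p : Ω → ℝ) (c : A → ℝ) (a : A) :
    Uag F p c a ≤ agentBest F p c :=
  le_ciSup (Set.finite_range _).bddAbove a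

lemma agentBest_eq (F : A → Ω → ℝ) (p : Ω → ℝ) (c : A → ℝ) (a : A)
    (ha : ∀ a' : A, Uag F p c a' ≤ Uag F p c a) : agentBest F p c = Uag F p c a :=
  le_antisymm (ciSup_le ha) (Uag_le_agentBest F p c a)

lemma menu_set_finite (F : A → Ω → ℝ) (r : Ω → ℝ) {K : ℕ} (m : Fin K → Ω → ℝ) (c : A → ℝ) :
    { x | ∃ i : Fin K, (∀ j : Fin K, agentBest F (m j) c ≤ agentBest F (m i) c) ∧
      x = Uprin F r (m i) c }.Finite := by
  refine (Set.finite_range (fun i => Uprin F r (m i) c)).subset ?_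
  rintro x ⟨a, _, rfl⟩
  exact ⟨a, rfl⟩

lemma menu_attained (F : A → Ω → ℝ) (r : Ω → ℝ) {K : ℕ} (hK : 0 < K)
    (m : Fin K → Ω → ℝ) (c : A → ℝ) :
    ∃ (i : Fin K) (a : A), (∀ j a', Uag F (m j) c a' ≤ Uag F (m i) c a) ∧
      UprinMenu F r m c = prinAct F r (m i) a := by
  haveI : Nonempty (Fin K) := ⟨⟨0, hK⟩⟩
  obtain ⟨i0, hi0⟩ := Finite.exists_max (fun i => agentBest F (m i) c)
  obtain ⟨i, hi, he⟩ := Set.Nonempty.csSup_mem (s := { x | ∃ i : Fin K,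
    (∀ j : Fin K, agentBest F (m j) c ≤ agentBest F (m i) c) ∧
      x = Uprin F r (m i) c }) ⟨_, i0, hi0, rfl⟩ (menu_set_finite F r m c)
  obtain ⟨a, ha, hb⟩ := Uprin_attained F r (m i) c
  refine ⟨i, a, fun j a' => ?_, he.trans hb⟩
  rw [← agentBest_eq F _ c a ha]
  exact (Uag_le_agentBest F _ c a').trans (hi j)

lemma le_menu (F : A → Ω → ℝ) (r : Ω → ℝ) {K : ℕ} (m : Fin K → Ω → ℝ) (c : A → ℝ)
    (i : Fin K) (a : A) (h : ∀ j a', Uag F (m j) c a' ≤ Uag F (m i) c a) :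
    prinAct F r (m i) a ≤ UprinMenu F r m c := by
  refine (le_Uprin F r (m i) c a (h i)).trans ?_
  refine le_csSup (menu_set_finite F r m c).bddAbove ⟨i, fun j => ?_, rfl⟩
  rw [agentBest_eq F _ c a (h i)]
  exact ciSup_le (h j)

lemma prinAct_eq (F : A → Ω → ℝ) (r p : Ω → ℝ) (a : A) :
    prinAct F r p a = ∑ ω, F a ω * r ω - ∑ ω, F a ω * p ω := by
  simp [prinAct, mul_sub, Finset.sum_sub_distrib]

lemma rew_le (h : IsPAInstance F r C) (a : A) : ∑ ω, F a ω * r ω ≤ 1 := by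
  rw [← h.F_sum a]
  exact Finset.sum_le_sum fun ω _ => mul_le_of_le_one_right (h.F_mem a ω).1 (h.r_mem ω).2

lemma rew_nonneg (h : IsPAInstance F r C) (a : A) : 0 ≤ ∑ ω, F a ω * r ω :=
  Finset.sum_nonneg fun ω _ => mul_nonneg (h.F_mem a ω).1 (h.r_mem ω).1

lemma Uprin_le_one (h : IsPAInstance F r C) (p : Ω → ℝ) (hp : IsContract p) (c : A → ℝ) :
    Uprin F r p c ≤ 1 := by
  obtain ⟨a, _, he⟩ := Uprin_attained F r p c
  rw [he, prinAct_eq]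
  have := rew_le h a
  have : 0 ≤ ∑ ω, F a ω * p ω := Finset.sum_nonneg fun ω _ => mul_nonneg (h.F_mem a ω).1 (hp ω)
  linarith

lemma OPT_le_one (h : IsPAInstance F r C) (c : A → ℝ) : OPT F r c ≤ 1 := by
  refine csSup_le ⟨_, 0, fun _ => le_rfl, rfl⟩ ?_
  rintro x ⟨p, hp, rfl⟩
  exact Uprin_le_one h p hp c

lemma OPT_nonneg (h : IsPAInstance F r C) (c : A → ℝ) : 0 ≤ OPT F r c := by
  have h1 : 0 ≤ Uprin F r 0 c := by
    obtain ⟨a, _, he⟩ := Uprin_attained F r 0 c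
    rw [he, prinAct_eq]
    simpa using rew_nonneg h a
  refine h1.trans (le_csSup ⟨1, ?_⟩ ⟨0, fun _ => le_rfl, rfl⟩)
  rintro x ⟨p, hp, rfl⟩
  exact Uprin_le_one h p hp c

lemma regretMenu_eq (F : A → Ω → ℝ) (r : Ω → ℝ) (C : Set (A → ℝ)) {K : ℕ}
    (m : Fin K → Ω → ℝ) :
    regretMenu F r C m = ⨆ c : C, (OPT F r c - UprinMenu F r m c) := by
  unfold regretMenu iSup
  congr 1
  ext x
  constructor
  · rintro ⟨c, hc, rfl⟩
    exact ⟨⟨c, hc⟩, rfl⟩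
  · rintro ⟨c, rfl⟩
    exact ⟨c, c.2, rfl⟩

lemma regret_bdd (h : IsPAInstance F r C) {K : ℕ} (hK : 0 < K) (m : Fin K → Ω → ℝ) :
    BddAbove (Set.range fun c : C => OPT F r c - UprinMenu F r m c) := by
  obtain ⟨b, hb⟩ := (Set.finite_range
    (fun q : Fin K × A => prinAct F r (m q.1) q.2)).bddBelow
  refine ⟨1 - b, ?_⟩
  rintro x ⟨c, rfl⟩
  obtain ⟨i, a, _, he⟩ := menu_attained F r hK m c
  have h1 := OPT_le_one h (c : A → ℝ)
  have h2 : b ≤ prinAct F r (m i) a := hb ⟨(i, a), rfl⟩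
  simp only [he]
  linarith

lemma continuous_Uag (F : A → Ω → ℝ) {K : ℕ} (i : Fin K) (c : A → ℝ) (a : A) :
    Continuous fun m : Fin K → Ω → ℝ => Uag F (m i) c a := by
  unfold Uag; fun_prop

lemma continuous_prinAct (F : A → Ω → ℝ) (r : Ω → ℝ) {K : ℕ} (i : Fin K) (a : A) :
    Continuous fun m : Fin K → Ω → ℝ => prinAct F r (m i) a := by
  unfold prinAct; fun_prop

lemma lsc_regret (h : IsPAInstance F r C) {K : ℕ} (hK : 0 < K) :
    LowerSemicontinuous fun m : Fin K → Ω → ℝ => regretMenu F r C m := by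
  simp only [regretMenu_eq]
  refine lowerSemicontinuous_ciSup (fun m => regret_bdd h hK m) fun c => ?_
  rw [lowerSemicontinuous_iff_isClosed_preimage]
  intro t
  have : (fun m : Fin K → Ω → ℝ => OPT F r c - UprinMenu F r m c) ⁻¹' Set.Iic t =
      ⋃ q : Fin K × A, ((⋂ q' : Fin K × A,
        {m | Uag F (m q'.1) c q'.2 ≤ Uag F (m q.1) c q.2}) ∩
        {m | OPT F r c - t ≤ prinAct F r (m q.1) q.2}) := by
    ext m
    simp only [Set.mem_preimage, Set.mem_Iic, Set.mem_iUnion, Set.mem_inter_iff, Set.mem_iInter,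
      Set.mem_setOf_eq, Prod.exists, Prod.forall]
    constructor
    · intro hm
      obtain ⟨i, a, hb, he⟩ := menu_attained F r hK m c
      exact ⟨i, a, hb, by linarith⟩
    · rintro ⟨i, a, hb, he⟩
      have := le_menu F r m c i a hb
      linarith
  rw [this]
  refine isClosed_iUnion_of_finite fun q => IsClosed.inter (isClosed_iInter fun q' => ?_) ?_
  · exact isClosed_le (continuous_Uag F _ _ _) (continuous_Uag F _ _ _)
  · exact isClosed_le continuous_const (continuous_prinAct F r _ _)

lemma regret_zero_le (h : IsPAInstance F r C) {K : ℕ} (hK : 0 < K) :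
    regretMenu F r C (0 : Fin K → Ω → ℝ) ≤ 1 := by
  rw [regretMenu_eq]
  haveI : Nonempty C := h.C_nonempty.to_subtype
  refine ciSup_le fun c => ?_
  obtain ⟨i, a, _, he⟩ := menu_attained F r hK 0 c
  have h1 := OPT_le_one h (c : A → ℝ)
  rw [he, prinAct_eq]
  have := rew_nonneg h a
  simp only [Pi.zero_apply, mul_zero, Finset.sum_const_zero]
  linarith

lemma regret_big (h : IsPAInstance F r C) {K : ℕ} (hK : 0 < K) (m : Fin K → Ω → ℝ)
    (hm : ∀ i, IsContract (m i)) (i : Fin K) (a : A) (ω : Ω) (hb : 3 < F a ω * m i ω) :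
    1 ≤ regretMenu F r C m := by
  rw [regretMenu_eq]
  obtain ⟨c, hc⟩ := h.C_nonempty
  refine le_trans ?_ (le_ciSup (regret_bdd h hK m) ⟨c, hc⟩)
  obtain ⟨i', a', hbest, he⟩ := menu_attained F r hK m c
  have h0 := OPT_nonneg h c
  have h1 := hbest i a
  have h2 : F a ω * m i ω ≤ ∑ ω, F a ω * m i ω :=
    Finset.single_le_sum (f := fun ω => F a ω * m i ω)
      (fun ω _ => mul_nonneg (h.F_mem a ω).1 (hm i ω)) (Finset.mem_univ ω)
  have h3 := rew_le h a'
  have h4 := (h.C_mem c hc a).2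
  have h5 := (h.C_mem c hc a').1
  simp only [he, prinAct_eq]
  unfold Uag at h1
  linarith

lemma exists_bound (h : IsPAInstance F r C) (ω : Ω) : ∃ B : ℝ, 0 ≤ B ∧
    ((∀ a, F a ω = 0) ∨ ∃ a, ∀ x, B < x → 3 < F a ω * x) := by
  by_cases h0 : ∀ a, F a ω = 0
  · exact ⟨0, le_rfl, Or.inl h0⟩
  · push Not at h0
    obtain ⟨a, ha⟩ := h0
    have hpos : 0 < F a ω := lt_of_le_of_ne (h.F_mem a ω).1 (Ne.symm ha)
    refine ⟨3 / F a ω, by positivity, Or.inr ⟨a, fun x hx => ?_⟩⟩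
    rw [div_lt_iff₀ hpos] at hx
    linarith

end Helpers

/-- For every positive integer `K` there exists a `K`-tuple of
deterministic contracts attaining the infimum of the regret over `K`-tuples. -/
theorem exists_regret_minimizing_menu_fixed_size
    {A Ω : Type} [Fintype A] [Fintype Ω] [Nonempty A] [Nonempty Ω]
    (F : A → Ω → ℝ) (r : Ω → ℝ) (C : Set (A → ℝ))
    (hInst : IsPAInstance F r C)
    (K : ℕ) (hK : 0 < K) :
    ∃ mstar : Fin K → Ω → ℝ, (∀ i, IsContract (mstar i)) ∧
      regretMenu F r C mstar =
        sInf { x | ∃ m : Fin K → Ω → ℝ, (∀ i, IsContract (m i)) ∧ x = regretMenu F r C m } := by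
  choose B hB0 hB using exists_bound hInst
  have hcpt : IsCompact (Set.Icc (0 : Fin K → Ω → ℝ) (fun _ => B)) := isCompact_Icc
  have hz : (0 : Fin K → Ω → ℝ) ∈ Set.Icc (0 : Fin K → Ω → ℝ) (fun _ => B) :=
    ⟨le_rfl, fun _ ω => hB0 ω⟩
  obtain ⟨ms, hms, hmin⟩ := ((lsc_regret hInst hK).lowerSemicontinuousOn _).exists_isMinOn
    ⟨0, hz⟩ hcpt
  rw [isMinOn_iff] at hmin
  refine ⟨ms, fun i ω => hms.1 i ω, ?_⟩
  symm
  refine IsLeast.csInf_eq ⟨⟨ms, fun i ω => hms.1 i ω, rfl⟩, ?_⟩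
  rintro x ⟨m, hm, rfl⟩
  by_cases hbig : ∃ i a ω, 3 < F a ω * m i ω
  · obtain ⟨i, a, ω, hb⟩ := hbig
    exact ((hmin 0 hz).trans (regret_zero_le hInst hK)).trans
      (regret_big hInst hK m hm i a ω hb)
  · push Not at hbig
    set m' : Fin K → Ω → ℝ := fun i ω => min (m i ω) (B ω) with hm'
    have key : ∀ i a ω, F a ω * m' i ω = F a ω * m i ω := by
      intro i a ω
      rcases hB ω with h0 | ⟨a0, h0⟩
      · simp [h0 a]
      · have : m i ω ≤ B ω := by
          by_contra hlt
          exact absurd (h0 _ (not_le.mp hlt)) (not_lt.mpr (hbig i a0 ω))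
        simp [hm', min_eq_left this]
    have hU : ∀ i, Uag F (m' i) = Uag F (m i) := by
      intro i
      funext c a
      simp only [Uag, key]
    have hP : ∀ i, prinAct F r (m' i) = prinAct F r (m i) := by
      intro i
      funext a
      simp only [prinAct_eq, key]
    have hR : regretMenu F r C m' = regretMenu F r C m := by
      simp only [regretMenu, UprinMenu, Uprin, agentBest, hU, hP]
    rw [← hR]
    exact hmin m' ⟨fun i ω => le_min (hm i ω) (hB0 ω), fun i ω => min_le_right _ _⟩
end

section
/- Fix a principal–agent instance whose uncertainty set C ⊆ [0,1]^A is convex, and for δ ∈ [0,1], c0 ∈ C and a deterministic contract p, let R_{δ,c0}(p) := sup_{c∈C_δ(c0)}(OPT(c) − U^p(p,c)). Then for every δ ∈ [0,1], h ∈ [0,1] with δ + h ≤ 1, and c0 ∈ C: 0 ≤ inf_p R_{δ+h,c0}(p) − inf_p R_{δ,c0}(p) ≤ 4·√(2h), where the infima range over all deterministic contracts. -/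
open Finset

variable {A Ω : Type} [Fintype A] [Fintype Ω] [Nonempty A] [Nonempty Ω]

/-- The `δ`-scaling of the uncertainty set `C` centered at `c0`. -/
def scaledSet (C : Set (A → ℝ)) (δ : ℝ) (c0 : A → ℝ) : Set (A → ℝ) :=
  { x | ∃ c ∈ C, x = δ • c + (1 - δ) • c0 }

/-- The regret `R_{δ,c0}(p)` of a deterministic contract `p` in the instance whose
uncertainty set is the `δ`-scaling of `C` centered at `c0`. -/
noncomputable def regretScaled (F : A → Ω → ℝ) (r : Ω → ℝ) (C : Set (A → ℝ))
    (δ : ℝ) (c0 : A → ℝ) (p : Ω → ℝ) : ℝ :=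
  sSup { x | ∃ c ∈ scaledSet C δ c0, x = OPT F r c - Uprin F r p c }

theorem aux_Uprin_exists {A Ω : Type} [Fintype A] [Fintype Ω] [Nonempty A]
    (F : A → Ω → ℝ) (r p : Ω → ℝ) (c : A → ℝ) :
    ∃ a, (∀ a', Uag F p c a' ≤ Uag F p c a) ∧ Uprin F r p c = prinAct F r p a := by
  have hfin : { x | ∃ a : A, (∀ a' : A, Uag F p c a' ≤ Uag F p c a) ∧
      x = prinAct F r p a }.Finite := by
    refine (Set.finite_range (prinAct F r p)).subset ?_
    rintro x ⟨a, -, rfl⟩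
    exact ⟨a, rfl⟩
  have hne : { x | ∃ a : A, (∀ a' : A, Uag F p c a' ≤ Uag F p c a) ∧
      x = prinAct F r p a }.Nonempty := by
    obtain ⟨a, ha⟩ := Finite.exists_max (Uag F p c)
    exact ⟨_, a, ha, rfl⟩
  obtain ⟨a, ha, h⟩ := hne.csSup_mem hfin
  exact ⟨a, ha, h⟩

theorem aux_prinAct_eq {A Ω : Type} [Fintype Ω]
    (F : A → Ω → ℝ) (r p : Ω → ℝ) (a : A) :
    prinAct F r p a = ∑ ω, F a ω * r ω - ∑ ω, F a ω * p ω := by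
  simp [prinAct, mul_sub, Finset.sum_sub_distrib]

theorem aux_prinAct_le {A Ω : Type} [Fintype A] [Fintype Ω] {F : A → Ω → ℝ} {r : Ω → ℝ}
    {C : Set (A → ℝ)} (hI : IsPAInstance F r C) {p : Ω → ℝ} (hp : IsContract p) (a : A) :
    prinAct F r p a ≤ 1 := by
  rw [← hI.F_sum a]
  refine Finset.sum_le_sum fun ω _ => ?_
  have h1 := (hI.F_mem a ω).1
  have h2 := (hI.r_mem ω).2
  have h3 := hp ω
  nlinarith

theorem aux_Uprin_le {A Ω : Type} [Fintype A] [Fintype Ω] [Nonempty A]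
    {F : A → Ω → ℝ} {r : Ω → ℝ}
    {C : Set (A → ℝ)} (hI : IsPAInstance F r C) {p : Ω → ℝ} (hp : IsContract p) (c : A → ℝ) :
    Uprin F r p c ≤ 1 := by
  obtain ⟨a, -, h⟩ := aux_Uprin_exists F r p c
  rw [h]; exact aux_prinAct_le hI hp a

theorem aux_le_OPT {A Ω : Type} [Fintype A] [Fintype Ω] [Nonempty A]
    {F : A → Ω → ℝ} {r : Ω → ℝ}
    {C : Set (A → ℝ)} (hI : IsPAInstance F r C) {p : Ω → ℝ} (hp : IsContract p) (c : A → ℝ) :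
    Uprin F r p c ≤ OPT F r c := by
  refine le_csSup ⟨1, ?_⟩ ⟨p, hp, rfl⟩
  rintro x ⟨q, hq, rfl⟩
  exact aux_Uprin_le hI hq c

theorem aux_OPT_le {A Ω : Type} [Fintype A] [Fintype Ω]
    {F : A → Ω → ℝ} {r : Ω → ℝ} {c : A → ℝ} {B : ℝ}
    (h : ∀ p, IsContract p → Uprin F r p c ≤ B) : OPT F r c ≤ B := by
  refine csSup_le ⟨_, 0, fun _ => le_rfl, rfl⟩ ?_
  rintro x ⟨q, hq, rfl⟩
  exact h q hq

theorem aux_key {A Ω : Type} [Fintype A] [Fintype Ω] [Nonempty A]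
    {F : A → Ω → ℝ} {r : Ω → ℝ}
    {C : Set (A → ℝ)} (hI : IsPAInstance F r C) {p : Ω → ℝ} (hp : IsContract p)
    {c c' : A → ℝ} {s h : ℝ} (hs : 0 < s) (hs1 : s ≤ 1) (hsh : s * s = 2 * h)
    (hc : ∀ a, |c a - c' a| ≤ h) :
    Uprin F r p c' - 2 * s ≤ Uprin F r (fun ω => (1 - s) * p ω + s * r ω) c := by
  obtain ⟨a, ha, h1⟩ := aux_Uprin_exists F r p c'
  obtain ⟨b, hb, h2⟩ := aux_Uprin_exists F r (fun ω => (1 - s) * p ω + s * r ω) c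
  have hle := aux_prinAct_le hI hp a
  have e : ∀ d, ∑ ω, F d ω * ((1 - s) * p ω + s * r ω)
      = (1 - s) * ∑ ω, F d ω * p ω + s * ∑ ω, F d ω * r ω := by
    intro d
    rw [Finset.mul_sum, Finset.mul_sum, ← Finset.sum_add_distrib]
    exact Finset.sum_congr rfl fun ω _ => by ring
  have ha := ha b
  have hb := hb a
  rw [h1, h2]
  simp only [aux_prinAct_eq, Uag, e] at *
  have ca := abs_le.1 (hc a)
  have cb := abs_le.1 (hc b)
  generalize ∑ ω, F a ω * p ω = pa at *
  generalize ∑ ω, F b ω * p ω = pb at *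
  generalize ∑ ω, F a ω * r ω = ra at *
  generalize ∑ ω, F b ω * r ω = rb at *
  have k : s * ((ra - pa) - s) ≤ s * (rb - pb) := by nlinarith
  have k := le_of_mul_le_mul_left k hs
  have k2 := mul_le_mul_of_nonneg_left k (sub_nonneg.2 hs1)
  nlinarith

theorem aux_regret_bdd {A Ω : Type} [Fintype A] [Fintype Ω] [Nonempty A]
    {F : A → Ω → ℝ} {r : Ω → ℝ}
    {C : Set (A → ℝ)} (hI : IsPAInstance F r C) (D : Set (A → ℝ)) (p : Ω → ℝ) :
    BddAbove { x | ∃ c ∈ D, x = OPT F r c - Uprin F r p c } := by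
  obtain ⟨m, hm⟩ := Finite.exists_min (prinAct F r p)
  refine ⟨1 - prinAct F r p m, ?_⟩
  rintro x ⟨c, -, rfl⟩
  obtain ⟨a, -, h⟩ := aux_Uprin_exists F r p c
  have := hm a
  have := aux_OPT_le (c := c) (fun q hq => aux_Uprin_le hI hq c)
  linarith

theorem aux_regret_nonneg {A Ω : Type} [Fintype A] [Fintype Ω] [Nonempty A]
    {F : A → Ω → ℝ} {r : Ω → ℝ}
    {C : Set (A → ℝ)} (hI : IsPAInstance F r C) (δ : ℝ) (c0 : A → ℝ) {p : Ω → ℝ}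
    (hp : IsContract p) : 0 ≤ regretScaled F r C δ c0 p := by
  refine Real.sSup_nonneg ?_
  rintro x ⟨c, -, rfl⟩
  exact sub_nonneg.2 (aux_le_OPT hI hp c)

/-- In an instance with convex uncertainty set, for every `δ, h ∈ [0,1]`
with `δ + h ≤ 1` and every center `c0 ∈ C`:
`0 ≤ inf_p R_{δ+h,c0}(p) − inf_p R_{δ,c0}(p) ≤ 4√(2h)`. -/
theorem regret_holder_in_uncertainty_level
    {A Ω : Type} [Fintype A] [Fintype Ω] [Nonempty A] [Nonempty Ω]
    (F : A → Ω → ℝ) (r : Ω → ℝ) (C : Set (A → ℝ))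
    (hInst : IsPAInstance F r C) (hconv : Convex ℝ C)
    (δ h : ℝ) (hδ : δ ∈ Set.Icc (0:ℝ) 1) (hh : h ∈ Set.Icc (0:ℝ) 1)
    (hδh : δ + h ≤ 1) (c0 : A → ℝ) (hc0 : c0 ∈ C) :
    0 ≤ sInf { x | ∃ p : Ω → ℝ, IsContract p ∧ x = regretScaled F r C (δ + h) c0 p }
        - sInf { x | ∃ p : Ω → ℝ, IsContract p ∧ x = regretScaled F r C δ c0 p } ∧
      sInf { x | ∃ p : Ω → ℝ, IsContract p ∧ x = regretScaled F r C (δ + h) c0 p }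
        - sInf { x | ∃ p : Ω → ℝ, IsContract p ∧ x = regretScaled F r C δ c0 p }
        ≤ 4 * Real.sqrt (2 * h) := by
  have hbb : ∀ d, BddBelow { x | ∃ p : Ω → ℝ, IsContract p ∧ x = regretScaled F r C d c0 p } := by
    intro d
    refine ⟨0, ?_⟩
    rintro x ⟨p, hp, rfl⟩
    exact aux_regret_nonneg hInst d c0 hp
  have hne : ∀ d, { x | ∃ p : Ω → ℝ, IsContract p ∧ x = regretScaled F r C d c0 p }.Nonempty :=
    fun d => ⟨_, 0, fun _ => le_rfl, rfl⟩
  have hsne : ∀ d p, { x | ∃ c ∈ scaledSet C d c0, x = OPT F r c - Uprin F r p c }.Nonempty :=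
    fun d p => ⟨_, _, ⟨c0, hc0, rfl⟩, rfl⟩
  have hsub : scaledSet C δ c0 ⊆ scaledSet C (δ + h) c0 := by
    rintro x ⟨c, hc, rfl⟩
    rcases eq_or_lt_of_le (add_nonneg hδ.1 hh.1) with h0 | h0
    · have h1 : h = 0 := by linarith [hδ.1, hh.1]
      exact ⟨c, hc, by rw [h1, add_zero]⟩
    · refine ⟨(δ / (δ + h)) • c + (h / (δ + h)) • c0,
        hconv hc hc0 (div_nonneg hδ.1 h0.le) (div_nonneg hh.1 h0.le) (by field_simp), ?_⟩
      ext a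
      simp only [Pi.add_apply, Pi.smul_apply, smul_eq_mul]
      field_simp
      ring
  constructor
  · rw [sub_nonneg]
    refine le_csInf (hne _) ?_
    rintro x ⟨p, hp, rfl⟩
    refine (csInf_le (hbb δ) ⟨p, hp, rfl⟩).trans ?_
    refine csSup_le_csSup (aux_regret_bdd hInst _ p) (hsne δ p) ?_
    rintro x ⟨c, hc, rfl⟩
    exact ⟨c, hsub hc, rfl⟩
  · rcases eq_or_lt_of_le hh.1 with h0 | h0
    · subst h0
      simp
    have hss : Real.sqrt (2 * h) * Real.sqrt (2 * h) = 2 * h := Real.mul_self_sqrt (by linarith)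
    have hs : 0 < Real.sqrt (2 * h) := Real.sqrt_pos.2 (by linarith)
    generalize Real.sqrt (2 * h) = s at *
    rcases le_or_gt s 1 with hs1 | hs1
    · rw [sub_le_iff_le_add, ← sub_le_iff_le_add']
      refine le_csInf (hne _) ?_
      rintro x ⟨p, hp, rfl⟩
      rw [sub_le_iff_le_add']
      have hq : ∀ p : Ω → ℝ, IsContract p → IsContract (fun ω => (1 - s) * p ω + s * r ω) :=
        fun p hp ω => add_nonneg (mul_nonneg (sub_nonneg.2 hs1) (hp ω))
          (mul_nonneg hs.le (hInst.r_mem ω).1)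
      refine (csInf_le (hbb (δ + h)) ⟨_, hq p hp, rfl⟩).trans ?_
      refine csSup_le (hsne _ _) ?_
      rintro x ⟨_, ⟨c1, hc1, rfl⟩, rfl⟩
      have hd : ∀ a, |((δ + h) • c1 + (1 - (δ + h)) • c0) a - (δ • c1 + (1 - δ) • c0) a| ≤ h := by
        intro a
        have e : ((δ + h) • c1 + (1 - (δ + h)) • c0) a - (δ • c1 + (1 - δ) • c0) a
            = h * (c1 a - c0 a) := by
          simp only [Pi.add_apply, Pi.smul_apply, smul_eq_mul]; ring
        have m1 := hInst.C_mem c1 hc1 a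
        have m0 := hInst.C_mem c0 hc0 a
        rw [e, abs_le]
        constructor <;> nlinarith [m1.1, m1.2, m0.1, m0.2]
      have hm : (δ • c1 + (1 - δ) • c0) ∈ scaledSet C δ c0 := ⟨c1, hc1, rfl⟩
      generalize (δ + h) • c1 + (1 - (δ + h)) • c0 = c at *
      generalize δ • c1 + (1 - δ) • c0 = c' at *
      have k1 := aux_key hInst hp hs hs1 hss hd
      have k2 : OPT F r c ≤ OPT F r c' + 2 * s := by
        refine aux_OPT_le fun p hp => ?_
        have := aux_key hInst hp hs hs1 hss (c := c') (c' := c)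
          (fun a => by rw [abs_sub_comm]; exact hd a)
        have := aux_le_OPT hInst (hq p hp) c'
        linarith
      have k3 : OPT F r c' - Uprin F r p c' ≤ regretScaled F r C δ c0 p :=
        le_csSup (aux_regret_bdd hInst _ p) ⟨c', hm, rfl⟩
      linarith
    · have z : IsContract (0 : Ω → ℝ) := fun _ => le_rfl
      have h1 : sInf { x | ∃ p : Ω → ℝ, IsContract p ∧ x = regretScaled F r C (δ + h) c0 p } ≤ 1 := by
        refine (csInf_le (hbb (δ + h)) ⟨0, z, rfl⟩).trans ?_
        refine csSup_le (hsne _ _) ?_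
        rintro x ⟨c, -, rfl⟩
        have k := aux_OPT_le (c := c) (fun q hq => aux_Uprin_le hInst hq c)
        obtain ⟨a, -, e⟩ := aux_Uprin_exists F r 0 c
        have : 0 ≤ prinAct F r 0 a := Finset.sum_nonneg fun ω _ =>
          mul_nonneg (hInst.F_mem a ω).1 (by simpa using (hInst.r_mem ω).1)
        linarith
      have h2 : 0 ≤ sInf { x | ∃ p : Ω → ℝ, IsContract p ∧ x = regretScaled F r C δ c0 p } := by
        refine le_csInf (hne _) ?_
        rintro x ⟨p, hp, rfl⟩
        exact aux_regret_nonneg hInst δ c0 hp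
      linarith
end
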